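/- arXiv:math/9907162 — 2 statements merged into one kernel-verified Lean document; each statement's English description precedes it below -/
import Mathlib

section
/- Let B ⊆ ℝ² be a closed topological disk (a set homeomorphic to the closed unit disk), and let D ⊆ ℝ² be compact with connected interior such that ∂B ∩ ∂D is finite and ∂B \ ∂D meets both Int D and ℝ² \ D along arcs. Suppose ∂B = φ₁(I) ∪ φ₂(I) where φ₁, φ₂ : [0,1] → ℝ² are continuous injective maps with φ₁((0,1)) ⊆ Int D, φ₂((0,1)) ⊆ ℝ² \ D, and common endpoints φᵢ(0) = z₁, φᵢ(1) = z₂ on ∂D. Then the open set Int B ∩ Int D is path-connected. -/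
/-- Accessibility of a boundary point from an open set. -/
def Accessible {X : Type*} [TopologicalSpace X] (U : Set X) (x : X) : Prop :=
  ∃ φ : unitInterval → X, Continuous φ ∧ Function.Injective φ ∧
    (∀ t, φ t ∈ closure U) ∧ (∀ t : unitInterval, (t : ℝ) < 1 → φ t ∈ U) ∧ φ 1 = x

open Set Filter Topology

/-- A continuous logarithm of the constant `1` on a preconnected set is constant. -/
lemma IsPreconnected.eq_of_exp_eq_one {X : Type*} [TopologicalSpace X] {S : Set X}
    (hS : IsPreconnected S) {f : X → ℂ} (hf : ContinuousOn f S)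
    (h : ∀ x ∈ S, Complex.exp (f x) = 1) {x y : X} (hx : x ∈ S) (hy : y ∈ S) : f x = f y := by
  have := Complex.isCoveringMap_exp.eqOn_of_comp_eqOn hS hf
    (g₂ := fun _ => f y) continuousOn_const
    (fun z hz => by simp [h z hz, h y hy]) hy rfl
  exact this hx

/-- Nonvanishing continuous functions on simply connected spaces have continuous logarithms. -/
lemma exists_continuous_log {A : Type*} [TopologicalSpace A] [SimplyConnectedSpace A]
    [LocallyPathConnectedSpace A] {f : A → ℂ} (hf : Continuous f) (h0 : ∀ x, f x ≠ 0) :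
    ∃ g : A → ℂ, Continuous g ∧ ∀ x, Complex.exp (g x) = f x := by
  obtain ⟨a⟩ : Nonempty A := inferInstance
  obtain ⟨F, ⟨-, hF⟩, -⟩ := Complex.isCoveringMapOn_exp.existsUnique_continuousMap_lifts
    ⟨f, hf⟩ (a₀ := a) (e₀ := Complex.log (f a)) (Complex.exp_log (h0 a)) (fun x => h0 x)
  exact ⟨F, F.continuous, fun x => congrFun hF x⟩

/-- A function which is `1` on the boundary of a bounded open set and does not vanish inside has
order zero at an isolated singularity. -/
lemma exponent_eq_zero_of_eq_one_on_frontier {W : Set ℂ} (hW : IsOpen W)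
    (hb : Bornology.IsBounded W) {p : ℂ} (hp : p ∈ W) {u : ℂ → ℂ}
    (hu : ContinuousOn u (closure W)) (hu0 : ∀ z ∈ closure W, u z ≠ 0) {k : ℤ}
    (h : ∀ z ∈ frontier W, (z - p) ^ k * u z = 1) : k = 0 := by
  classical
  let F : ℂ → ℂ := fun z => if z ∈ W then (z - p) ^ k * u z else 1
  have hF : ContinuousOn F {p}ᶜ := by
    apply ContinuousOn.if
    · rintro z ⟨-, hz⟩
      exact h z hz
    · refine ContinuousOn.mul (ContinuousOn.zpow₀ (by fun_prop) k ?_) (hu.mono fun z hz => hz.2)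
      rintro z ⟨hz, -⟩
      exact Or.inl (sub_ne_zero.2 hz)
    · exact continuousOn_const
  have hF0 : ∀ z ≠ p, F z ≠ 0 := by
    intro z hz
    simp only [F]
    split_ifs with hzW
    · exact mul_ne_zero (zpow_ne_zero _ (sub_ne_zero.2 hz)) (hu0 z (subset_closure hzW))
    · exact one_ne_zero
  have hne : ∀ w, p + Complex.exp w ≠ p := fun w => by simp [Complex.exp_ne_zero]
  obtain ⟨L, hL, hLF⟩ := exists_continuous_log (f := fun w => F (p + Complex.exp w))
    (hF.comp_continuous (by fun_prop) hne) (fun w => hF0 _ (hne w))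
  have hper : ∀ w : ℂ, Complex.exp (w + 2 * Real.pi * Complex.I) = Complex.exp w :=
    Complex.exp_periodic
  have hconst : ∀ w w' : ℂ, L (w + 2 * Real.pi * Complex.I) - L w =
      L (w' + 2 * Real.pi * Complex.I) - L w' := by
    intro w w'
    refine isPreconnected_univ.eq_of_exp_eq_one (f := fun w => L (w + 2 * Real.pi * Complex.I) - L w)
      (by fun_prop) ?_ (mem_univ w) (mem_univ w')
    intro v _
    rw [Complex.exp_sub, hLF, hLF, hper, div_self (hF0 _ (hne v))]
  -- far away the logarithm is constant
  obtain ⟨R, hR0, hR⟩ := hb.subset_ball_lt 0 p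
  have hfar : ∃ w : ℂ, L (w + 2 * Real.pi * Complex.I) - L w = 0 := by
    refine ⟨(Real.log R : ℂ), ?_⟩
    rw [sub_eq_zero]
    refine (convex_halfSpace_re_ge (Real.log R)).isPreconnected.eq_of_exp_eq_one hL.continuousOn
      ?_ (by simp) (by simp)
    intro w hw
    rw [hLF]
    refine if_neg fun hmem => ?_
    have := hR hmem
    simp only [Metric.mem_ball, dist_self_add_left, Complex.norm_exp] at this
    have h2 := Real.exp_le_exp.2 (show Real.log R ≤ w.re from hw)
    rw [Real.exp_log hR0] at h2
    linarith
  -- near `p` the logarithm is that of `(z - p) ^ k`, up to a continuous function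
  have hup := hu0 p (subset_closure hp)
  have hcont : ContinuousAt (fun z => u z / u p) p :=
    (hu.continuousAt (mem_of_superset (hW.mem_nhds hp) subset_closure)).div_const _
  have hev : ∀ᶠ z in 𝓝 p, u z / u p ∈ Complex.slitPlane :=
    hcont.eventually (Complex.isOpen_slitPlane.mem_nhds (by simp [div_self hup]))
  obtain ⟨r, hr0, hr⟩ := Metric.eventually_nhds_iff_ball.1 (hev.and (hW.mem_nhds hp))
  have hnear : ∃ w : ℂ, L (w + 2 * Real.pi * Complex.I) - L w = k * (2 * Real.pi * Complex.I) := by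
    refine ⟨(Real.log (r / 2) : ℂ), ?_⟩
    have hball : ∀ w : ℂ, w.re ≤ Real.log (r / 2) → p + Complex.exp w ∈ Metric.ball p r := by
      intro w hw
      simp only [Metric.mem_ball, dist_self_add_left, Complex.norm_exp]
      have h2 := Real.exp_le_exp.2 hw
      rw [Real.exp_log (by positivity)] at h2
      linarith
    have key := (convex_halfSpace_re_le (Real.log (r / 2))).isPreconnected.eq_of_exp_eq_one
      (f := fun w => L w - k * w - Complex.log (u (p + Complex.exp w) / u p) - Complex.log (u p))
      ?_ ?_ (x := (Real.log (r / 2) : ℂ) + 2 * Real.pi * Complex.I) (y := (Real.log (r / 2) : ℂ))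
      (by simp) (by simp)
    · simp only [hper] at key
      linear_combination key
    · refine ContinuousOn.sub (ContinuousOn.sub (by fun_prop) (ContinuousOn.clog ?_ ?_))
        continuousOn_const
      · refine ContinuousOn.div_const (hu.comp (by fun_prop) ?_) _
        intro w hw
        exact subset_closure (hr _ (hball w hw)).2
      · intro w hw
        exact (hr _ (hball w hw)).1
    · intro w hw
      have hm := (hr _ (hball w hw)).2
      have huw := hu0 _ (subset_closure hm)
      rw [Complex.exp_sub, Complex.exp_sub, Complex.exp_sub, hLF, Complex.exp_log hup,
        Complex.exp_log (div_ne_zero huw hup), Complex.exp_int_mul]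
      simp only [F, if_pos (show p + Complex.exp w ∈ W from hm), add_sub_cancel_left]
      have := zpow_ne_zero k (Complex.exp_ne_zero w)
      field_simp
  obtain ⟨w, hw⟩ := hfar
  obtain ⟨w', hw'⟩ := hnear
  have := (hw'.symm.trans (hconst w' w)).trans hw
  simpa [Complex.I_ne_zero, Real.pi_ne_zero] using this

/-- Points of a connected open set are not separated by its complement, in logarithmic form. -/
lemma exists_log_div_on_compl {Ω : Set ℂ} (hΩ : IsOpen Ω) (hc : IsPreconnected Ω) {p q : ℂ}
    (hp : p ∈ Ω) (hq : q ∈ Ω) : ∃ L : ℂ → ℂ, ContinuousOn L Ωᶜ ∧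
      ∀ z ∈ Ωᶜ, Complex.exp (L z) = (z - p) / (z - q) := by
  have hne : ∀ {x z : ℂ}, x ∈ Ω → z ∈ Ωᶜ → z - x ≠ 0 := by
    rintro x z hx hz h
    rw [sub_eq_zero.1 h] at hz
    exact hz hx
  let P : ℂ → ℂ → Prop := fun p q => ∃ L : ℂ → ℂ, ContinuousOn L Ωᶜ ∧
      ∀ z ∈ Ωᶜ, Complex.exp (L z) = (z - p) / (z - q)
  have hsymm : ∀ p q, P p q → P q p := by
    rintro p q ⟨L, hL, h⟩
    exact ⟨fun z => - L z, hL.neg, fun z hz => by rw [Complex.exp_neg, h z hz, inv_div]⟩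
  refine hc.induction₂ P ?_ ?_ ?_ hp hq
  · intro x hx
    obtain ⟨r, hr, hb⟩ := Metric.isOpen_iff.1 hΩ x hx
    refine mem_nhdsWithin_of_mem_nhds ?_
    filter_upwards [Metric.ball_mem_nhds x hr] with y hy
    refine hsymm _ _ ⟨fun z => Complex.log ((z - y) / (z - x)), ?_, ?_⟩
    · refine ContinuousOn.clog (ContinuousOn.div (by fun_prop) (by fun_prop) fun z hz => hne hx hz) ?_
      intro z hz
      have h : ‖(x - y) / (z - x)‖ < 1 := by
        rw [norm_div, div_lt_one (norm_pos_iff.2 (hne hx hz))]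
        have h1 : ¬ dist z x < r := fun h => hz (hb h)
        rw [dist_eq_norm, not_lt] at h1
        rw [Metric.mem_ball, dist_comm, dist_eq_norm] at hy
        linarith
      convert Complex.mem_slitPlane_of_norm_lt_one h using 1
      have := hne hx hz
      field_simp
      ring
    · intro z hz
      exact Complex.exp_log (div_ne_zero (hne (hb hy) hz) (hne hx hz))
  · rintro x y z hx hy hz ⟨L, hL, h⟩ ⟨M, hM, h'⟩
    refine ⟨fun w => L w + M w, hL.add hM, fun w hw => ?_⟩
    rw [Complex.exp_add, h w hw, h' w hw]
    exact div_mul_div_cancel₀ (hne hy hw)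
  · intro x y _ _
    exact hsymm x y

/-- Exponents of a monomial in `z - p`, `z - q`, `z - r` with a continuous logarithm on a closed set
separating `p` from infinity and from `q`, `r` vanish. -/
lemma exponent_eq_zero_of_exists_log {X W : Set ℂ} (hX : IsClosed X) (hW : IsOpen W)
    (hb : Bornology.IsBounded W) (hWX : frontier W ⊆ X) {p q r : ℂ} (hp : p ∈ W)
    (hq : q ∉ closure W) (hr : r ∉ closure W) {H : ℂ → ℂ} (hH : ContinuousOn H X) {k l m : ℤ}
    (h : ∀ z ∈ X, (z - p) ^ k * (z - q) ^ l * (z - r) ^ m = Complex.exp (H z)) : k = 0 := by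
  obtain ⟨G, hG⟩ := ContinuousMap.exists_restrict_eq hX ⟨X.domRestrict H, hH.domRestrict⟩
  have hGH : ∀ z ∈ X, G z = H z := fun z hz => DFunLike.congr_fun hG ⟨z, hz⟩
  have hne : ∀ {x z : ℂ}, x ∉ closure W → z ∈ closure W → z - x ≠ 0 := by
    rintro x z hx hz h
    rw [sub_eq_zero.1 h] at hz
    exact hx hz
  refine exponent_eq_zero_of_eq_one_on_frontier hW hb hp
    (u := fun z => (z - q) ^ l * (z - r) ^ m * Complex.exp (-G z)) ?_ ?_ ?_
  · refine ContinuousOn.mul (ContinuousOn.mul ?_ ?_) (by fun_prop)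
    · exact ContinuousOn.zpow₀ (by fun_prop) _ fun z hz => Or.inl (hne hq hz)
    · exact ContinuousOn.zpow₀ (by fun_prop) _ fun z hz => Or.inl (hne hr hz)
  · intro z hz
    exact mul_ne_zero (mul_ne_zero (zpow_ne_zero _ (hne hq hz)) (zpow_ne_zero _ (hne hr hz)))
      (Complex.exp_ne_zero _)
  · intro z hz
    rw [← mul_assoc, ← mul_assoc, h z (hWX hz), hGH z (hWX hz), ← Complex.exp_add, add_neg_cancel,
      Complex.exp_zero]

/-- Logarithms of `(z - p) / (z - q)` on the complement of a domain and on a crosscut which agree at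
one endpoint of the crosscut differ by a period at the other. -/
lemma exists_log_div_pair {Ω : Set ℂ} (hΩ : IsOpen Ω) (hc : IsPreconnected Ω)
    {φ : unitInterval → ℂ} (hφ : Continuous φ) (hi : Function.Injective φ)
    (h0 : φ 0 ∉ Ω) (h1 : φ 1 ∉ Ω) {p q : ℂ} (hp : p ∈ Ω \ range φ) (hq : q ∈ Ω \ range φ) :
    ∃ (L l : ℂ → ℂ) (n : ℤ), ContinuousOn L Ωᶜ ∧ ContinuousOn l (range φ) ∧
      (∀ z ∈ Ωᶜ, Complex.exp (L z) = (z - p) / (z - q)) ∧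
      (∀ z ∈ range φ, Complex.exp (l z) = (z - p) / (z - q)) ∧
      L (φ 0) = l (φ 0) ∧ L (φ 1) = l (φ 1) + n * (2 * Real.pi * Complex.I) := by
  obtain ⟨L, hL, hLe⟩ := exists_log_div_on_compl hΩ hc hp.1 hq.1
  have hne : ∀ {x : ℂ}, x ∉ range φ → ∀ t, φ t - x ≠ 0 := fun hx t h =>
    hx ⟨t, sub_eq_zero.1 h⟩
  obtain ⟨g, hg, hge⟩ := exists_continuous_log (A := ℝ)
    (f := fun s => (φ (projIcc 0 1 zero_le_one s) - p) / (φ (projIcc 0 1 zero_le_one s) - q))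
    (Continuous.div (by fun_prop) (by fun_prop) fun s => hne hq.2 _)
    (fun s => div_ne_zero (hne hp.2 _) (hne hq.2 _))
  obtain ⟨G, hG⟩ := ContinuousMap.exists_extension
    (hφ.isClosedEmbedding hi) ⟨fun t : unitInterval => g t, by fun_prop⟩
  have hGφ : ∀ t : unitInterval, Complex.exp (G (φ t)) = (φ t - p) / (φ t - q) := by
    intro t
    have h2 : G (φ t) = g t := DFunLike.congr_fun hG t
    rw [h2, hge, projIcc_val]
  obtain ⟨a, ha⟩ := Complex.exp_eq_exp_iff_exists_int.1 ((hLe _ h0).trans (hGφ 0).symm)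
  obtain ⟨b, hb⟩ := Complex.exp_eq_exp_iff_exists_int.1 ((hLe _ h1).trans (hGφ 1).symm)
  refine ⟨L, fun z => G z + a * (2 * Real.pi * Complex.I), b - a, hL, by fun_prop, hLe, ?_, ha, ?_⟩
  · rintro _ ⟨t, rfl⟩
    rw [Complex.exp_add, hGφ, Complex.exp_int_mul_two_pi_mul_I, mul_one]
  · push_cast
    linear_combination hb

/-- A crosscut does not cut a bounded plane domain into three disjoint open pieces. -/
lemma not_three_pieces_of_crosscut {Ω : Set ℂ} (hΩ : IsOpen Ω) (hc : IsPreconnected Ω)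
    (hb : Bornology.IsBounded Ω) {φ : unitInterval → ℂ} (hφ : Continuous φ)
    (hi : Function.Injective φ) (h0 : φ 0 ∉ Ω) (h1 : φ 1 ∉ Ω)
    (hint : ∀ t, φ t ∉ Ω → t = 0 ∨ t = 1) {W : Fin 3 → Set ℂ} (hW : ∀ i, IsOpen (W i))
    (hne : ∀ i, (W i).Nonempty) (hd : Pairwise fun i j => Disjoint (W i) (W j))
    (hcov : ⋃ i, W i = Ω \ range φ) : False := by
  choose x hx using hne
  have hsub : ∀ i, W i ⊆ Ω \ range φ := fun i => hcov ▸ subset_iUnion W i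
  have hcl : ∀ i j, i ≠ j → Disjoint (closure (W i)) (W j) := fun i j hij =>
    (hd hij).closure_left (hW j)
  have hmem : ∀ i j, i ≠ j → x j ∉ closure (W i) := fun i j hij h =>
    disjoint_left.1 (hcl i j hij) h (hx j)
  have hφc : IsClosed (range φ) := (hφ.isClosedEmbedding hi).isClosed_range
  have hX : IsClosed (Ωᶜ ∪ range φ) := hΩ.isClosed_compl.union hφc
  have hfr : ∀ i, frontier (W i) ⊆ Ωᶜ ∪ range φ := by
    intro i z hz
    by_contra hcon
    have hz' : z ∈ Ω \ range φ := by
      simp only [mem_union, mem_compl_iff, not_or, not_not] at hcon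
      exact hcon
    rw [← hcov, mem_iUnion] at hz'
    obtain ⟨j, hj⟩ := hz'
    rw [(hW i).frontier_eq] at hz
    by_cases hij : i = j
    · exact hz.2 (hij ▸ hj)
    · exact disjoint_left.1 (hcl i j hij) hz.1 hj
  obtain ⟨L, l, n, hL, hl, hLe, hle, hL0, hL1⟩ :=
    exists_log_div_pair hΩ hc hφ hi h0 h1 (hsub 0 (hx 0)) (hsub 1 (hx 1))
  obtain ⟨M, k, m, hM, hk, hMe, hke, hM0, hM1⟩ :=
    exists_log_div_pair hΩ hc hφ hi h0 h1 (hsub 0 (hx 0)) (hsub 2 (hx 2))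
  obtain ⟨a, b, hab, hper⟩ : ∃ a b : ℤ, ¬ (a = 0 ∧ b = 0) ∧ a * n + b * m = 0 := by
    by_cases hn : n = 0
    · exact ⟨1, 0, by simp, by simp [hn]⟩
    · exact ⟨m, -n, by simp [hn], by ring⟩
  have hper' : (a : ℂ) * n + b * m = 0 := by exact_mod_cast hper
  classical
  let H : ℂ → ℂ := fun z => if z ∈ Ωᶜ then a * L z + b * M z else a * l z + b * k z
  have hHφ : ∀ z ∈ range φ, H z = a * l z + b * k z := by
    rintro _ ⟨t, rfl⟩
    by_cases ht : φ t ∈ Ω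
    · simp [H, ht]
    · simp only [H, mem_compl_iff, ht, not_false_eq_true, if_true]
      rcases hint t ht with rfl | rfl
      · rw [hL0, hM0]
      · rw [hL1, hM1]
        linear_combination (2 * Real.pi * Complex.I) * hper'
  have hHc : ∀ z ∈ Ωᶜ, H z = a * L z + b * M z := fun z hz => if_pos hz
  have hH : ContinuousOn H (Ωᶜ ∪ range φ) := by
    refine ContinuousOn.union_of_isClosed ?_ ?_ hΩ.isClosed_compl hφc
    · exact ((hL.const_mul _).add (hM.const_mul _)).congr hHc
    · exact ((hl.const_mul _).add (hk.const_mul _)).congr hHφ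
  have hexp : ∀ z ∈ Ωᶜ ∪ range φ, Complex.exp (H z) =
      ((z - x 0) / (z - x 1)) ^ a * ((z - x 0) / (z - x 2)) ^ b := by
    rintro z (hz | hz)
    · rw [hHc z hz, Complex.exp_add, Complex.exp_int_mul, Complex.exp_int_mul, hLe z hz, hMe z hz]
    · rw [hHφ z hz, Complex.exp_add, Complex.exp_int_mul, Complex.exp_int_mul, hle z hz, hke z hz]
  have hmon : ∀ z ∈ Ωᶜ ∪ range φ,
      (z - x 0) ^ (a + b) * (z - x 1) ^ (-a) * (z - x 2) ^ (-b) = Complex.exp (H z) := by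
    intro z hz
    have hz0 : z - x 0 ≠ 0 := by
      intro h
      rw [sub_eq_zero.1 h] at hz
      exact hz.elim (fun h => h (hsub 0 (hx 0)).1) (hsub 0 (hx 0)).2
    rw [hexp z hz, div_zpow, div_zpow, zpow_add₀ hz0, zpow_neg, zpow_neg]
    ring
  have hWb : ∀ i, Bornology.IsBounded (W i) := fun i => hb.subset fun z hz => (hsub i hz).1
  have ha := exponent_eq_zero_of_exists_log hX (hW 1) (hWb 1) (hfr 1) (hx 1)
    (hmem 1 0 (by decide)) (hmem 1 2 (by decide)) hH (k := -a) (l := a + b) (m := -b)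
    fun z hz => by rw [← hmon z hz]; ring
  have hbm := exponent_eq_zero_of_exists_log hX (hW 2) (hWb 2) (hfr 2) (hx 2)
    (hmem 2 0 (by decide)) (hmem 2 1 (by decide)) hH (k := -b) (l := a + b) (m := -a)
    fun z hz => by rw [← hmon z hz]; ring
  exact hab ⟨neg_eq_zero.1 ha, neg_eq_zero.1 hbm⟩

/-- Spaces of dimension at least two do not embed into the real line. -/
lemma not_injective_of_one_lt_rank {E : Type*} [AddCommGroup E] [Module ℝ E] [TopologicalSpace E]
    [ContinuousAdd E] [ContinuousSMul ℝ E] (h : 1 < Module.rank ℝ E) {f : E → ℝ}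
    (hf : Continuous f) : ¬ Function.Injective f := by
  intro hi
  have hmid : ∀ a b c : E, f a < f b → f b < f c → False := by
    intro a b c hab hbc
    have hab' : a ≠ b := fun h => hab.ne (congrArg f h)
    have hcb' : c ≠ b := fun h => hbc.ne' (congrArg f h)
    obtain ⟨x, hx, hxb⟩ := (isConnected_compl_singleton_of_one_lt_rank h b).isPreconnected.image f
      hf.continuousOn |>.ordConnected.out (mem_image_of_mem f hab') (mem_image_of_mem f hcb')
      ⟨hab.le, hbc.le⟩
    exact hx (hi hxb)
  have : Nontrivial E := rank_pos_iff_nontrivial.1 (zero_lt_one.trans h)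
  obtain ⟨v, hv⟩ := exists_ne (0 : E)
  have h1 : f 0 ≠ f v := fun h => hv (hi h).symm
  have h2 : f 0 ≠ f (-v) := fun h => hv (neg_eq_zero.1 (hi h).symm)
  have h3 : f v ≠ f (-v) := fun h => by
    have h4 : (2 : ℝ) • v = 0 := by
      rw [two_smul]
      nth_rewrite 2 [hi h]
      exact add_neg_cancel v
    exact hv ((smul_eq_zero.1 h4).resolve_left two_ne_zero)
  have := hmid 0 v (-v)
  have := hmid 0 (-v) v
  have := hmid v 0 (-v)
  have := hmid v (-v) 0
  have := hmid (-v) v 0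
  have := hmid (-v) 0 v
  grind

/-- A topological disk whose frontier is, inside an open set `U`, contained in an arc has interior
points in `U` as soon as it meets `U`. -/
lemma interior_inter_nonempty_of_homeomorph_closedBall {B U : Set (EuclideanSpace ℝ (Fin 2))}
    (hU : IsOpen U) (ψ : B ≃ₜ Metric.closedBall (0 : EuclideanSpace ℝ (Fin 2)) 1)
    {φ : unitInterval → EuclideanSpace ℝ (Fin 2)} (hφ : Continuous φ) (hi : Function.Injective φ)
    (hfr : frontier B ∩ U ⊆ range φ) (hBU : (B ∩ U).Nonempty) : (interior B ∩ U).Nonempty := by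
  by_contra hemp
  rw [not_nonempty_iff_eq_empty] at hemp
  have hsub : B ∩ U ⊆ range φ := by
    rintro x ⟨hxB, hxU⟩
    refine hfr ⟨⟨subset_closure hxB, fun hx => ?_⟩, hxU⟩
    exact (hemp ▸ (⟨hx, hxU⟩ : x ∈ interior B ∩ U) : x ∈ (∅ : Set _))
  obtain ⟨G, hG⟩ := ContinuousMap.exists_extension (hφ.isClosedEmbedding hi)
    (⟨fun t : unitInterval => (t : ℝ), by fun_prop⟩ : C(unitInterval, ℝ))
  have hGφ : ∀ t, G (φ t) = t := fun t => DFunLike.congr_fun hG t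
  have hGi : InjOn G (range φ) := by
    rintro _ ⟨s, rfl⟩ _ ⟨t, rfl⟩ hst
    rw [hGφ, hGφ] at hst
    rw [Subtype.ext hst]
  obtain ⟨O, hO, hOU⟩ := isOpen_induced_iff.1
    (hU.preimage (continuous_subtype_val.comp ψ.symm.continuous))
  obtain ⟨x, hxB, hxU⟩ := hBU
  have hxO : (ψ ⟨x, hxB⟩ : EuclideanSpace ℝ (Fin 2)) ∈ O := by
    have : ψ ⟨x, hxB⟩ ∈ Subtype.val ⁻¹' O := by
      rw [hOU]
      simpa using hxU
    exact this
  have hcl : (ψ ⟨x, hxB⟩ : EuclideanSpace ℝ (Fin 2)) ∈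
      closure (Metric.ball (0 : EuclideanSpace ℝ (Fin 2)) 1) := by
    rw [closure_ball _ one_ne_zero]
    exact (ψ ⟨x, hxB⟩).2
  obtain ⟨c, hcO, hcb⟩ := mem_closure_iff.1 hcl O hO hxO
  obtain ⟨r, hr, hball⟩ := Metric.isOpen_iff.1 (hO.inter Metric.isOpen_ball) c ⟨hcO, hcb⟩
  let e := OpenPartialHomeomorph.univBall c r
  have hec : Continuous e := OpenPartialHomeomorph.continuous_univBall c r
  have hei : Function.Injective e := by
    have := e.injOn
    rwa [OpenPartialHomeomorph.univBall_source, injOn_univ] at this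
  have he : ∀ y, e y ∈ O ∩ Metric.ball 0 1 := by
    intro y
    refine hball ?_
    rw [← OpenPartialHomeomorph.univBall_target c hr]
    exact e.map_source (by simp [e])
  let j : EuclideanSpace ℝ (Fin 2) → B :=
    fun y => ψ.symm ⟨e y, Metric.ball_subset_closedBall (he y).2⟩
  have hjφ : ∀ y, (j y : EuclideanSpace ℝ (Fin 2)) ∈ range φ := by
    intro y
    refine hsub ⟨(j y).2, ?_⟩
    have : (⟨e y, Metric.ball_subset_closedBall (he y).2⟩ : Metric.closedBall _ _) ∈
        Subtype.val ⁻¹' O := (he y).1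
    rw [hOU] at this
    exact this
  have hj : Continuous j := ψ.symm.continuous.comp (hec.subtype_mk _)
  refine not_injective_of_one_lt_rank (E := EuclideanSpace ℝ (Fin 2)) ?_
    (f := fun y => G (j y)) (by fun_prop) ?_
  · rw [← Module.finrank_eq_rank, finrank_euclideanSpace_fin]
    norm_num
  · intro y y' hyy
    have h1 := ψ.symm.injective (Subtype.ext (hGi (hjφ y) (hjφ y') hyy))
    exact hei (congrArg Subtype.val h1)

/-- If `B` is a closed topological disk whose boundary is the Jordan curve obtained by
concatenating an arc `φ₁` through the interior of `D` and an arc `φ₂` through the complement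
of `D`, meeting at two boundary points of `D`, then `Int B ∩ Int D` is path-connected. -/
theorem interior_cap_interior_pathConnected
    (D B : Set (EuclideanSpace ℝ (Fin 2))) (hD : IsCompact D)
    (hint : IsConnected (interior D)) (hcompl : IsConnected Dᶜ)
    (hacc₁ : ∀ x ∈ frontier D, Accessible (interior D) x)
    (hacc₂ : ∀ x ∈ frontier D, Accessible Dᶜ x)
    (φ₁ φ₂ : unitInterval → EuclideanSpace ℝ (Fin 2))
    (hc₁ : Continuous φ₁) (hc₂ : Continuous φ₂)
    (hi₁ : Function.Injective φ₁) (hi₂ : Function.Injective φ₂)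
    (z₁ z₂ : EuclideanSpace ℝ (Fin 2)) (hz₁ : z₁ ∈ frontier D) (hz₂ : z₂ ∈ frontier D)
    (hz : z₁ ≠ z₂)
    (h₁0 : φ₁ 0 = z₁) (h₁1 : φ₁ 1 = z₂) (h₂0 : φ₂ 0 = z₁) (h₂1 : φ₂ 1 = z₂)
    (h₁int : ∀ t : unitInterval, 0 < (t : ℝ) → (t : ℝ) < 1 → φ₁ t ∈ interior D)
    (h₂int : ∀ t : unitInterval, 0 < (t : ℝ) → (t : ℝ) < 1 → φ₂ t ∈ Dᶜ)
    (hBclosed : IsClosed B)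
    (hBdisk : Nonempty (B ≃ₜ (Metric.closedBall (0 : EuclideanSpace ℝ (Fin 2)) 1)))
    (hBfront : frontier B = Set.range φ₁ ∪ Set.range φ₂) :
    IsPathConnected (interior B ∩ interior D) := by
  have hrange₂ : Disjoint (range φ₂) (interior D) := by
    rw [disjoint_left]
    rintro _ ⟨t, rfl⟩ ht
    rcases eq_or_ne t 0 with rfl | h0
    · exact hz₁.2 (h₂0 ▸ ht)
    rcases eq_or_ne t 1 with rfl | h1
    · exact hz₂.2 (h₂1 ▸ ht)
    exact h₂int t (unitInterval.pos_iff_ne_zero.2 h0) (unitInterval.lt_one_iff_ne_one.2 h1)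
      (interior_subset ht)
  have hfr : frontier B ∩ interior D ⊆ range φ₁ := by
    rw [hBfront]
    rintro x ⟨hx | hx, hxD⟩
    · exact hx
    · exact (disjoint_left.1 hrange₂ hx hxD).elim
  obtain ⟨t, ht0, ht1⟩ : ∃ t : unitInterval, 0 < (t : ℝ) ∧ (t : ℝ) < 1 :=
    ⟨⟨1 / 2, by norm_num, by norm_num⟩, by norm_num, by norm_num⟩
  have htD := h₁int t ht0 ht1
  have htB : φ₁ t ∈ frontier B := hBfront ▸ Or.inl ⟨t, rfl⟩
  have hopen : IsOpen (interior B ∩ interior D) := isOpen_interior.inter isOpen_interior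
  have hne : (interior B ∩ interior D).Nonempty :=
    interior_inter_nonempty_of_homeomorph_closedBall isOpen_interior hBdisk.some hc₁ hi₁ hfr
      ⟨_, hBclosed.frontier_subset htB, htD⟩
  have hout : (interior D \ B).Nonempty := by
    have : φ₁ t ∈ closure Bᶜ := by
      rw [closure_compl]
      exact htB.2
    exact mem_closure_iff.1 this _ isOpen_interior htD
  refine hopen.isConnected_iff_isPathConnected.1 ⟨hne, fun u v hu hv huv hsu hsv => ?_⟩
  by_contra hdisj
  rw [not_nonempty_iff_eq_empty] at hdisj
  let e : ℂ ≃ₜ EuclideanSpace ℝ (Fin 2) :=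
    Complex.orthonormalBasisOneI.repr.toHomeomorph
  let W : Fin 3 → Set (EuclideanSpace ℝ (Fin 2)) :=
    ![interior B ∩ interior D ∩ u, interior B ∩ interior D ∩ v, interior D \ B]
  have hWd : Pairwise fun i j => Disjoint (W i) (W j) := by
    have h01 : Disjoint (W 0) (W 1) := disjoint_left.2 fun x hx hx' =>
      (hdisj ▸ (⟨hx.1, hx.2, hx'.2⟩ : x ∈ interior B ∩ interior D ∩ (u ∩ v)) : x ∈ (∅ : Set _))
    have h02 : Disjoint (W 0) (W 2) := disjoint_left.2 fun x hx hx' =>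
      hx'.2 (interior_subset hx.1.1)
    have h12 : Disjoint (W 1) (W 2) := disjoint_left.2 fun x hx hx' =>
      hx'.2 (interior_subset hx.1.1)
    intro i j hij
    fin_cases i <;> fin_cases j <;>
      first | exact absurd rfl hij | assumption | (apply Disjoint.symm; assumption)
  have hWcov : ⋃ i, W i = interior D \ range φ₁ := by
    ext x
    simp only [mem_iUnion, Fin.exists_fin_succ, W]
    have h1 : x ∈ range φ₁ → x ∈ B ∧ x ∉ interior B := fun hx => by
      have : x ∈ frontier B := hBfront ▸ Or.inl hx
      exact ⟨hBclosed.frontier_subset this, this.2⟩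
    have h2 : x ∈ B → x ∉ interior B → x ∈ interior D → x ∈ range φ₁ := fun hB hB' hD =>
      hfr ⟨⟨subset_closure hB, hB'⟩, hD⟩
    have h3 := @huv x
    have h4 := @interior_subset _ _ B x
    simp only [Matrix.cons_val_zero, Matrix.cons_val_succ, mem_inter_iff, Set.mem_sdiff, mem_union,
      IsEmpty.exists_iff, or_false] at h3 ⊢
    tauto
  have hpre : IsPreconnected (e ⁻¹' interior D) :=
    e.isPreconnected_preimage.2 hint.isPreconnected
  refine not_three_pieces_of_crosscut (isOpen_interior.preimage e.continuous) hpre ?_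
    (e.symm.continuous.comp hc₁) (e.symm.injective.comp hi₁) ?_ ?_ ?_ (W := fun i => e ⁻¹' W i)
    ?_ ?_ ?_ ?_
  · exact (e.isCompact_preimage.2 hD).isBounded.subset (preimage_mono interior_subset)
  · simpa [h₁0] using hz₁.2
  · simpa [h₁1] using hz₂.2
  · intro s hs
    by_contra! hcon
    refine hs ?_
    simpa using h₁int s (unitInterval.pos_iff_ne_zero.2 hcon.1)
      (unitInterval.lt_one_iff_ne_one.2 hcon.2)
  · intro i
    refine IsOpen.preimage e.continuous ?_
    fin_cases i
    · exact hopen.inter hu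
    · exact hopen.inter hv
    · exact isOpen_interior.sdiff hBclosed
  · intro i
    refine Nonempty.preimage ?_ e.surjective
    fin_cases i
    · exact hsu
    · exact hsv
    · exact hout
  · exact fun i j hij => (hWd hij).preimage e
  · rw [← preimage_iUnion, hWcov, range_comp, preimage_sdiff, e.symm.image_eq_preimage_symm, e.symm_symm]
end

section
/- Let x, y ∈ Int I², x ≠ y, and let φₓ', φₓ'', φ_y : [0,1] → I² be continuous injective crosscuts from the open bottom edge to the open top edge, each mapping (0,1) into Int I², with φₓ'(1/2) = φₓ''(1/2) = x and φ_y(1/2) = y. Suppose φₓ'(I) ∩ φ_y(I) = ∅, y lies in the same connected component of I² \ φₓ'(I) as the right edge, and y lies in the same connected component of I² \ φₓ''(I) as the left edge. Then there exists a continuous map ψ : [0,1] → I² with ψ(I) ⊆ φₓ''(I) ∪ φ_y(I), ψ(0) in the open bottom edge, ψ(1) in the open top edge, and x, y ∉ ψ(I). -/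
/-- The unit square `I² = [0,1] × [0,1]` in the plane. -/
def unitSq : Set (ℝ × ℝ) := Set.Icc (0, 0) (1, 1)

/-- The open bottom edge `(0,1) × {0}` of the unit square. -/
def botEdge : Set (ℝ × ℝ) := {p | p.1 ∈ Set.Ioo (0 : ℝ) 1 ∧ p.2 = 0}

/-- The open top edge `(0,1) × {1}` of the unit square. -/
def topEdge : Set (ℝ × ℝ) := {p | p.1 ∈ Set.Ioo (0 : ℝ) 1 ∧ p.2 = 1}

/-- The open left edge `{0} × (0,1)` of the unit square. -/
def leftEdge : Set (ℝ × ℝ) := {p | p.1 = 0 ∧ p.2 ∈ Set.Ioo (0 : ℝ) 1}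

/-- The open right edge `{1} × (0,1)` of the unit square. -/
def rightEdge : Set (ℝ × ℝ) := {p | p.1 = 1 ∧ p.2 ∈ Set.Ioo (0 : ℝ) 1}

/-- The full left edge `{0} × [0,1]` of the unit square. -/
def leftFull : Set (ℝ × ℝ) := {p | p.1 = 0 ∧ p.2 ∈ Set.Icc (0 : ℝ) 1}

/-- The full right edge `{1} × [0,1]` of the unit square. -/
def rightFull : Set (ℝ × ℝ) := {p | p.1 = 1 ∧ p.2 ∈ Set.Icc (0 : ℝ) 1}

/-- The midpoint parameter `1/2` of the unit interval. -/
noncomputable def half : unitInterval := ⟨1/2, by constructor <;> norm_num⟩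

/-- A bare crosscut of the square: a continuous injective path from the open bottom edge to
the open top edge, lying in the open square except for its endpoints. -/
def IsBareCrosscut (φ : unitInterval → ℝ × ℝ) : Prop :=
  Continuous φ ∧ Function.Injective φ ∧ φ 0 ∈ botEdge ∧ φ 1 ∈ topEdge ∧
    ∀ t : unitInterval, 0 < (t : ℝ) → (t : ℝ) < 1 → φ t ∈ interior unitSq

open Complex Set

theorem exists_continuous_exp_eq {X : Type*} [TopologicalSpace X] [SimplyConnectedSpace X]
    [LocallyPathConnectedSpace X] {f : X → ℂ} (hf : Continuous f) (h₀ : ∀ x, f x ≠ 0) :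
    ∃ g : X → ℂ, Continuous g ∧ ∀ x, exp (g x) = f x := by
  obtain ⟨x₀⟩ := (inferInstance : Nonempty X)
  obtain ⟨g, ⟨-, hg⟩, -⟩ := isCoveringMapOn_exp.existsUnique_continuousMap_lifts
    (⟨f, hf⟩ : C(X, ℂ)) (exp_log (h₀ x₀)) h₀
  exact ⟨g, g.continuous, fun x ↦ congrFun hg x⟩

/-- Two continuous logarithms of proportional functions have the same increment. -/
theorem sub_eq_sub_of_exp_eq_mul_exp {g h : ℝ → ℂ} {u v : ℝ} (huv : u ≤ v) (c : ℂ)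
    (hg : ContinuousOn g (Icc u v)) (hh : ContinuousOn h (Icc u v))
    (hexp : ∀ s ∈ Icc u v, exp (g s) = c * exp (h s)) : g v - g u = h v - h u := by
  have hu : u ∈ Icc u v := left_mem_Icc.2 huv
  have key : EqOn g (fun s ↦ h s + (g u - h u)) (Icc u v) := by
    refine IsSeparatedMap.eqOn_of_comp_eqOn isCoveringMap_exp.isSeparatedMap
      isCoveringMap_exp.isLocalHomeomorph.isLocallyInjective isPreconnected_Icc hg
      (hh.add continuousOn_const) (fun s hs ↦ Subtype.ext ?_) hu (by simp)
    have h1 := hexp u hu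
    simp only [Function.comp_apply, exp_add, exp_sub]
    rw [hexp s hs, h1]
    field_simp [exp_ne_zero]
  have := key (right_mem_Icc.2 huv)
  simp only at this
  rw [this]
  ring

/-- The branch of the logarithm with cut along the negative imaginary axis. -/
noncomputable def upperLog (z : ℂ) : ℂ := log (-I * z) + Real.pi / 2 * I

/-- The branch of the logarithm with cut along the positive imaginary axis. -/
noncomputable def lowerLog (z : ℂ) : ℂ := log (I * z) - Real.pi / 2 * I

theorem lowerLog_neg (z : ℂ) : lowerLog (-z) = upperLog z - Real.pi * I := by
  simp only [lowerLog, upperLog, mul_neg, neg_mul]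
  ring

theorem upperLog_neg (z : ℂ) : upperLog (-z) = lowerLog z + Real.pi * I := by
  simp only [lowerLog, upperLog, mul_neg, neg_mul, neg_neg]
  ring

theorem exp_upperLog {z : ℂ} (hz : z ≠ 0) : exp (upperLog z) = z := by
  rw [upperLog, exp_add, exp_log (mul_ne_zero (neg_ne_zero.2 I_ne_zero) hz), exp_pi_div_two_mul_I]
  linear_combination -z * I_mul_I

theorem exp_lowerLog {z : ℂ} (hz : z ≠ 0) : exp (lowerLog z) = z := by
  have h := lowerLog_neg (-z)
  rw [neg_neg] at h
  rw [h, exp_sub, exp_upperLog (neg_ne_zero.2 hz), exp_pi_mul_I]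
  ring

theorem continuousOn_upperLog : ContinuousOn upperLog {z | 0 ≤ z.im ∧ z ≠ 0} := by
  refine ContinuousOn.add (ContinuousOn.clog (by fun_prop) fun z hz ↦ ?_) continuousOn_const
  rw [mem_slitPlane_iff]
  obtain ⟨h1, h2⟩ := hz
  by_contra! H
  simp at H
  exact h2 (Complex.ext H.2 (le_antisymm H.1 h1))

theorem continuousOn_lowerLog : ContinuousOn lowerLog {z | z.im ≤ 0 ∧ z ≠ 0} := by
  have h : lowerLog = fun z ↦ upperLog (-z) - Real.pi * I := by
    ext z
    rw [upperLog_neg]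
    ring
  rw [h]
  refine ContinuousOn.sub (continuousOn_upperLog.comp (by fun_prop) fun z hz ↦ ?_)
    continuousOn_const
  simpa using hz

theorem upperLog_of_re_pos {z : ℂ} (hz : 0 < z.re) : upperLog z = log z := by
  have h := abs_lt.1 (abs_arg_lt_pi_div_two_iff.2 (Or.inl hz))
  have hz0 : z ≠ 0 := by rintro rfl; simp at hz
  rw [upperLog, log_mul (neg_ne_zero.2 I_ne_zero) hz0 ?_, log_neg_I]
  · ring
  · rw [arg_neg_I]
    constructor <;> linarith [Real.pi_pos]

theorem lowerLog_of_re_pos {z : ℂ} (hz : 0 < z.re) : lowerLog z = log z := by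
  have h := abs_lt.1 (abs_arg_lt_pi_div_two_iff.2 (Or.inl hz))
  have hz0 : z ≠ 0 := by rintro rfl; simp at hz
  rw [lowerLog, log_mul I_ne_zero hz0 ?_, log_I]
  · ring
  · rw [arg_I]
    constructor <;> linarith [Real.pi_pos]

/-- `HasSideIndex a p w` says that the increment of a continuous logarithm of `a - p` along
`[0, 1]` exceeds the difference of the upper and lower branches at the endpoints by `w`. For a
crosscut `a`, the index is `0` on the left and `-2πi` on the right. -/
def HasSideIndex (a : ℝ → ℂ) (p w : ℂ) : Prop :=
  ∀ h : ℝ → ℂ, ContinuousOn h (Icc 0 1) → (∀ s ∈ Icc (0 : ℝ) 1, exp (h s) = a s - p) →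
    h 1 - h 0 = upperLog (a 1 - p) - lowerLog (a 0 - p) + w

theorem HasSideIndex.unique {a : ℝ → ℂ} {p w w' : ℂ} (ha : Continuous a) (hp : ∀ s, a s ≠ p)
    (hw : HasSideIndex a p w) (hw' : HasSideIndex a p w') : w = w' := by
  obtain ⟨h, hc, hh⟩ := exists_continuous_exp_eq (ha.sub continuous_const)
    fun s ↦ sub_ne_zero.2 (hp s)
  have h1 := hw h hc.continuousOn fun s _ ↦ hh s
  have h2 := hw' h hc.continuousOn fun s _ ↦ hh s
  linear_combination h2 - h1

theorem hasSideIndex_of_re_lt {a : ℝ → ℂ} {p : ℂ} (ha : Continuous a)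
    (hp : ∀ s, p.re < (a s).re) : HasSideIndex a p 0 := by
  intro h hc hh
  have hpos (s) : 0 < (a s - p).re := by simpa using hp s
  rw [upperLog_of_re_pos (hpos 1), lowerLog_of_re_pos (hpos 0), add_zero]
  refine sub_eq_sub_of_exp_eq_mul_exp (h := fun s ↦ log (a s - p)) zero_le_one 1 hc ?_
    fun s hs ↦ ?_
  · exact ContinuousOn.clog (by fun_prop) fun s _ ↦ Or.inl (hpos s)
  · rw [hh s hs, exp_log, one_mul]
    intro h0
    simpa [h0] using hpos s

theorem hasSideIndex_of_lt_re {a : ℝ → ℂ} {p : ℂ} (ha : Continuous a)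
    (hp : ∀ s, (a s).re < p.re) : HasSideIndex a p (-(2 * Real.pi * I)) := by
  intro h hc hh
  have hpos (s) : 0 < (p - a s).re := by simpa using hp s
  have h1 := upperLog_neg (p - a 1)
  have h0 := lowerLog_neg (p - a 0)
  rw [neg_sub, lowerLog_of_re_pos (hpos 1)] at h1
  rw [neg_sub, upperLog_of_re_pos (hpos 0)] at h0
  rw [h1, h0]
  have key := sub_eq_sub_of_exp_eq_mul_exp (g := h) (h := fun s ↦ log (p - a s)) zero_le_one (-1)
    hc (ContinuousOn.clog (by fun_prop) fun s _ ↦ Or.inl (hpos s)) fun s hs ↦ by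
      rw [hh s hs, exp_log, neg_one_mul, neg_sub]
      intro h0
      simpa [h0] using hpos s
  rw [key]
  ring

/-- The side index does not change along a segment in the strip which misses the curve. -/
theorem HasSideIndex.of_segment {a : ℝ → ℂ} {p q w : ℂ} (ha : Continuous a) (ha0 : (a 0).im = 0)
    (ha1 : (a 1).im = 1) (hp : p.im ∈ Icc (0 : ℝ) 1) (hq : q.im ∈ Icc (0 : ℝ) 1)
    (hseg : ∀ s, a s ∉ segment ℝ p q) (hw : HasSideIndex a p w) : HasSideIndex a q w := by
  intro h hc hh
  set γ : ℝ → ℂ := fun u ↦ AffineMap.lineMap p q (projIcc (0 : ℝ) 1 zero_le_one u : ℝ) with hγ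
  have hγc : Continuous γ := by
    refine AffineMap.lineMap_continuous.comp ?_
    exact continuous_subtype_val.comp continuous_projIcc
  have hγseg (u) : γ u ∈ segment ℝ p q := by
    rw [segment_eq_image_lineMap]
    exact mem_image_of_mem _ (projIcc (0 : ℝ) 1 zero_le_one u).2
  have hγim (u) : (γ u).im ∈ Icc (0 : ℝ) 1 := by
    have hconv : Convex ℝ {z : ℂ | z.im ∈ Icc (0 : ℝ) 1} :=
      (convex_Icc (0 : ℝ) 1).linear_preimage imLm
    exact hconv.segment_subset hp hq (hγseg u)
  have hγ0 : γ 0 = p := by simp [hγ]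
  have hγ1 : γ 1 = q := by simp [hγ]
  have hne (s u) : a s - γ u ≠ 0 := sub_ne_zero.2 fun h ↦ hseg s (h ▸ hγseg u)
  obtain ⟨G, hG, hGe⟩ := exists_continuous_exp_eq (X := ℝ × ℝ) (f := fun z ↦ a z.1 - γ z.2)
    (by fun_prop) fun z ↦ hne z.1 z.2
  have e0 := hw (fun s ↦ G (s, 0)) (by fun_prop) fun s _ ↦ by rw [hGe, hγ0]
  have e1 := sub_eq_sub_of_exp_eq_mul_exp (g := h) (h := fun s ↦ G (s, 1)) zero_le_one 1 hc
    (by fun_prop) fun s hs ↦ by rw [hGe, hγ1, hh s hs, one_mul]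
  have e2 := sub_eq_sub_of_exp_eq_mul_exp (g := fun u ↦ G (1, u))
    (h := fun u ↦ upperLog (a 1 - γ u)) zero_le_one 1 (by fun_prop)
    (continuousOn_upperLog.comp (by fun_prop) fun u _ ↦ ⟨by simpa [ha1] using (hγim u).2, hne 1 u⟩)
    fun u _ ↦ by rw [hGe, exp_upperLog (hne 1 u), one_mul]
  have e3 := sub_eq_sub_of_exp_eq_mul_exp (g := fun u ↦ G (0, u))
    (h := fun u ↦ lowerLog (a 0 - γ u)) zero_le_one 1 (by fun_prop)
    (continuousOn_lowerLog.comp (by fun_prop) fun u _ ↦ ⟨by simpa [ha0] using (hγim u).1, hne 0 u⟩)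
    fun u _ ↦ by rw [hGe, exp_lowerLog (hne 0 u), one_mul]
  simp only [hγ0, hγ1] at e0 e1 e2 e3
  linear_combination e0 + e1 + e2 - e3

/-- If the first half of `a` misses the second half of `b` and vice versa, then the side indices
of the midpoint of each curve with respect to the other one add up to `-2πi`. -/
theorem HasSideIndex.swap {a b : ℝ → ℂ} {w : ℂ} (ha : Continuous a) (hb : Continuous b)
    (ha0 : (a 0).im = 0) (ha1 : (a 1).im = 1) (hb0 : (b 0).im = 0) (hb1 : (b 1).im = 1)
    (haI : ∀ s, (a s).im ∈ Icc (0 : ℝ) 1) (hbI : ∀ s, (b s).im ∈ Icc (0 : ℝ) 1)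
    (hlu : ∀ s ≤ 1 / 2, ∀ t ≥ 1 / 2, a s ≠ b t) (hul : ∀ s ≥ 1 / 2, ∀ t ≤ 1 / 2, a s ≠ b t)
    (hw : HasSideIndex a (b (1 / 2)) w) :
    HasSideIndex b (a (1 / 2)) (-(2 * Real.pi * I) - w) := by
  intro h hc hh
  have hay (s) : a s - b (1 / 2) ≠ 0 := sub_ne_zero.2 <| (le_total s (1 / 2)).elim
    (fun hs ↦ hlu s hs _ le_rfl) fun hs ↦ hul s hs _ le_rfl
  obtain ⟨k, hkc, hk⟩ := exists_continuous_exp_eq (f := fun s ↦ a s - b (1 / 2)) (by fun_prop) hay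
  have hne₁ (s t) : b (max t (1 / 2)) - a (min s (1 / 2)) ≠ 0 :=
    sub_ne_zero.2 (hlu _ (min_le_right _ _) _ (le_max_right _ _)).symm
  have hne₂ (s t) : b (min t (1 / 2)) - a (max s (1 / 2)) ≠ 0 :=
    sub_ne_zero.2 (hul _ (le_max_right _ _) _ (min_le_right _ _)).symm
  obtain ⟨G, hG, hGe⟩ := exists_continuous_exp_eq (X := ℝ × ℝ)
    (f := fun z ↦ b (max z.2 (1 / 2)) - a (min z.1 (1 / 2))) (by fun_prop) fun z ↦ hne₁ z.1 z.2
  obtain ⟨H, hH, hHe⟩ := exists_continuous_exp_eq (X := ℝ × ℝ)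
    (f := fun z ↦ b (min z.2 (1 / 2)) - a (max z.1 (1 / 2))) (by fun_prop) fun z ↦ hne₂ z.1 z.2
  have hl : (0 : ℝ) ≤ 1 / 2 := by norm_num
  have hu : (1 / 2 : ℝ) ≤ 1 := by norm_num
  have m0 : min (0 : ℝ) (1 / 2) = 0 := min_eq_left hl
  have m1 : max (1 : ℝ) (1 / 2) = 1 := max_eq_left hu
  have ek := hw k hkc.continuousOn fun s _ ↦ hk s
  have k1 := sub_eq_sub_of_exp_eq_mul_exp (g := k) (h := fun s ↦ G (s, 1 / 2)) hl (-1)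
    hkc.continuousOn (by fun_prop) fun s hs ↦ by
      simp only [hGe, hk, max_self, min_eq_left hs.2]
      ring
  have k2 := sub_eq_sub_of_exp_eq_mul_exp (g := k) (h := fun s ↦ H (s, 1 / 2)) hu (-1)
    hkc.continuousOn (by fun_prop) fun s hs ↦ by
      simp only [hHe, hk, min_self, max_eq_left hs.1]
      ring
  have h1 := sub_eq_sub_of_exp_eq_mul_exp (g := h) (h := fun t ↦ H (1 / 2, t)) hl 1
    (hc.mono (Icc_subset_Icc_right hu)) (by fun_prop) fun t ht ↦ by
      simp only [hHe, hh t ⟨ht.1, ht.2.trans hu⟩, max_self, min_eq_left ht.2]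
      ring
  have h2 := sub_eq_sub_of_exp_eq_mul_exp (g := h) (h := fun t ↦ G (1 / 2, t)) hu 1
    (hc.mono (Icc_subset_Icc_left hl)) (by fun_prop) fun t ht ↦ by
      simp only [hGe, hh t ⟨hl.trans ht.1, ht.2⟩, min_self, max_eq_left ht.1]
      ring
  have g1 := sub_eq_sub_of_exp_eq_mul_exp (g := fun t ↦ G (0, t))
    (h := fun t ↦ upperLog (b (max t (1 / 2)) - a (min 0 (1 / 2)))) hu 1 (by fun_prop)
    (continuousOn_upperLog.comp (by fun_prop)
      fun t _ ↦ ⟨by simpa only [m0, sub_im, ha0, sub_zero] using (hbI _).1, hne₁ 0 t⟩)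
    fun t _ ↦ by rw [hGe, exp_upperLog (hne₁ 0 t), one_mul]
  have g2 := sub_eq_sub_of_exp_eq_mul_exp (g := fun s ↦ G (s, 1))
    (h := fun s ↦ upperLog (b (max 1 (1 / 2)) - a (min s (1 / 2)))) hl 1 (by fun_prop)
    (continuousOn_upperLog.comp (by fun_prop)
      fun s _ ↦ ⟨by simpa only [m1, sub_im, hb1, sub_nonneg] using (haI _).2, hne₁ s 1⟩)
    fun s _ ↦ by rw [hGe, exp_upperLog (hne₁ s 1), one_mul]
  have g3 := sub_eq_sub_of_exp_eq_mul_exp (g := fun s ↦ H (s, 0))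
    (h := fun s ↦ lowerLog (b (min 0 (1 / 2)) - a (max s (1 / 2)))) hu 1 (by fun_prop)
    (continuousOn_lowerLog.comp (by fun_prop)
      fun s _ ↦ ⟨by simpa only [m0, sub_im, hb0, zero_sub, neg_nonpos] using (haI _).1, hne₂ s 0⟩)
    fun s _ ↦ by rw [hHe, exp_lowerLog (hne₂ s 0), one_mul]
  have g4 := sub_eq_sub_of_exp_eq_mul_exp (g := fun t ↦ H (1, t))
    (h := fun t ↦ lowerLog (b (min t (1 / 2)) - a (max 1 (1 / 2)))) hl 1 (by fun_prop)
    (continuousOn_lowerLog.comp (by fun_prop)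
      fun t _ ↦ ⟨by simpa only [m1, sub_im, ha1, sub_nonpos] using (hbI _).2, hne₂ 1 t⟩)
    fun t _ ↦ by rw [hHe, exp_lowerLog (hne₂ 1 t), one_mul]
  have n0 := upperLog_neg (a 0 - b (1 / 2))
  have n1 := lowerLog_neg (a 1 - b (1 / 2))
  simp only [m0, m1, max_self, min_self, neg_sub] at g1 g2 g3 g4 n0 n1 k1 k2 h1 h2
  linear_combination h1 + h2 + k1 + k2 - ek + g1 + g2 + g3 + g4 - n0 + n1

/-- A curve in the plane, as a complex-valued function which is constant outside `[0, 1]`. -/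
noncomputable def complexCurve (φ : unitInterval → ℝ × ℝ) (s : ℝ) : ℂ :=
  equivRealProdCLM.symm (φ (projIcc 0 1 zero_le_one s))

theorem unitSq_eq : unitSq = Icc 0 1 ×ˢ Icc 0 1 := by
  rw [unitSq, Icc_prod_eq]

theorem interior_unitSq : interior unitSq = Ioo 0 1 ×ˢ Ioo 0 1 := by
  rw [unitSq_eq, interior_prod_eq, interior_Icc]

theorem projIcc_half : projIcc (0 : ℝ) 1 zero_le_one (1 / 2) = half :=
  projIcc_of_mem zero_le_one half.2

theorem complexCurve_half (φ : unitInterval → ℝ × ℝ) :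
    complexCurve φ (1 / 2) = equivRealProdCLM.symm (φ half) := by
  rw [complexCurve, projIcc_half]

namespace IsBareCrosscut

variable {φ φ' : unitInterval → ℝ × ℝ}

theorem mem_prod (hφ : IsBareCrosscut φ) (t : unitInterval) :
    φ t ∈ Ioo (0 : ℝ) 1 ×ˢ Icc (0 : ℝ) 1 := by
  obtain ⟨-, -, h0, h1, hi⟩ := hφ
  rcases eq_or_ne t 0 with rfl | ht0
  · exact ⟨h0.1, by simp [h0.2]⟩
  rcases eq_or_ne t 1 with rfl | ht1
  · exact ⟨h1.1, by simp [h1.2]⟩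
  · have h := hi t (unitInterval.pos_iff_ne_zero.2 ht0) (unitInterval.lt_one_iff_ne_one.2 ht1)
    rw [interior_unitSq] at h
    exact ⟨h.1, Ioo_subset_Icc_self h.2⟩

theorem continuous_complexCurve (hφ : IsBareCrosscut φ) : Continuous (complexCurve φ) :=
  equivRealProdCLM.symm.continuous.comp (hφ.1.comp continuous_projIcc)

theorem re_complexCurve (hφ : IsBareCrosscut φ) (s : ℝ) : (complexCurve φ s).re ∈ Ioo (0 : ℝ) 1 :=
  (hφ.mem_prod _).1

theorem im_complexCurve (hφ : IsBareCrosscut φ) (s : ℝ) : (complexCurve φ s).im ∈ Icc (0 : ℝ) 1 :=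
  (hφ.mem_prod _).2

theorem im_complexCurve_zero (hφ : IsBareCrosscut φ) : (complexCurve φ 0).im = 0 := by
  have h : projIcc (0 : ℝ) 1 zero_le_one 0 = 0 := projIcc_left _
  simpa [complexCurve, h] using hφ.2.2.1.2

theorem im_complexCurve_one (hφ : IsBareCrosscut φ) : (complexCurve φ 1).im = 1 := by
  have h : projIcc (0 : ℝ) 1 zero_le_one 1 = 1 := projIcc_right _
  simpa [complexCurve, h] using hφ.2.2.2.1.2

/-- The side index is constant on the components of the complement of a crosscut. -/
theorem hasSideIndex_of_mem_connectedComponentIn (hφ : IsBareCrosscut φ) {p q : ℝ × ℝ} {w : ℂ}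
    (hq : q ∈ connectedComponentIn (unitSq \ range φ) p)
    (hw : HasSideIndex (complexCurve φ) (equivRealProdCLM.symm q) w) :
    HasSideIndex (complexCurve φ) (equivRealProdCLM.symm p) w := by
  have hp := mem_connectedComponentIn (connectedComponentIn_nonempty_iff.1 ⟨q, hq⟩)
  have hsub := connectedComponentIn_subset (unitSq \ range φ) p
  have him {z : ℝ × ℝ} (hz : z ∈ connectedComponentIn (unitSq \ range φ) p) :
      (equivRealProdCLM.symm z).im ∈ Icc (0 : ℝ) 1 := by
    have h := (hsub hz).1
    rw [unitSq_eq] at h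
    exact h.2
  refine (isPreconnected_connectedComponentIn.induction₂
    (fun z z' ↦ HasSideIndex (complexCurve φ) (equivRealProdCLM.symm z) w ↔
      HasSideIndex (complexCurve φ) (equivRealProdCLM.symm z') w)
    (fun z hz ↦ ?_) (fun _ _ _ _ _ _ h h' ↦ h.trans h') (fun _ _ _ _ h ↦ h.symm) hq hp).1 hw
  obtain ⟨ε, hε, hball⟩ := Metric.isOpen_iff.1 (isCompact_range hφ.1).isClosed.isOpen_compl z
    (hsub hz).2
  filter_upwards [inter_mem_nhdsWithin _ (Metric.ball_mem_nhds z hε)] with z' hz'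
  have hseg (s : ℝ) : complexCurve φ s ∉
      segment ℝ (equivRealProdCLM.symm z) (equivRealProdCLM.symm z') := by
    intro h
    have h' := image_segment ℝ equivRealProdCLM.symm.toLinearMap.toAffineMap z z'
    rw [LinearMap.coe_toAffineMap] at h'
    obtain ⟨z'', hz'', he⟩ := h'.symm ▸ h
    have : z'' = φ (projIcc 0 1 zero_le_one s) := equivRealProdCLM.symm.injective he
    exact hball ((convex_ball z ε).segment_subset (Metric.mem_ball_self hε) hz'.2 hz'')
      (this ▸ mem_range_self _)
  have key {z₁ z₂ : ℂ} := HasSideIndex.of_segment (p := z₁) (q := z₂) (w := w)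
    hφ.continuous_complexCurve hφ.im_complexCurve_zero hφ.im_complexCurve_one
  exact ⟨key (him hz) (him hz'.1) hseg, key (him hz'.1) (him hz) (by rwa [segment_symm])⟩

/-- If the first half of one crosscut meets the second half of another one, following the first
crosscut up to the intersection point and then the second one avoids both midpoints. -/
theorem exists_path_of_meet (hφ : IsBareCrosscut φ) (hφ' : IsBareCrosscut φ') {s t : ℝ}
    (hs : s ≤ 1 / 2) (ht : 1 / 2 ≤ t) (hst : complexCurve φ s = complexCurve φ' t)
    (h : φ half ∉ range φ') (h' : φ' half ∉ range φ) :
    ∃ ψ : unitInterval → ℝ × ℝ, Continuous ψ ∧ range ψ ⊆ range φ ∪ range φ' ∧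
      ψ 0 ∈ botEdge ∧ ψ 1 ∈ topEdge ∧ φ half ∉ range ψ ∧ φ' half ∉ range ψ := by
  set u := projIcc (0 : ℝ) 1 zero_le_one s
  set v := projIcc (0 : ℝ) 1 zero_le_one t
  have huv : φ u = φ' v := equivRealProdCLM.symm.injective hst
  have hu : u < half := by
    refine lt_of_le_of_ne (projIcc_half ▸ monotone_projIcc _ hs) ?_
    intro he
    exact h ⟨v, by rw [← huv, he]⟩
  have hv : half < v := by
    refine lt_of_le_of_ne (projIcc_half ▸ monotone_projIcc _ ht) ?_
    intro he
    exact h' ⟨u, by rw [huv, ← he]⟩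
  have hIcc {a b : unitInterval} (hab : a ≤ b) : JoinedIn (Icc a b) a b := by
    have hpc := ((convex_Icc (a : ℝ) b).isPathConnected (nonempty_Icc.2 hab)).image
      (continuous_projIcc (h := zero_le_one' ℝ))
    refine (hpc.joinedIn a ⟨a, left_mem_Icc.2 hab, projIcc_val _ _⟩ b
      ⟨b, right_mem_Icc.2 hab, projIcc_val _ _⟩).mono ?_
    rintro _ ⟨r, hr, rfl⟩
    have h1 := monotone_projIcc (zero_le_one' ℝ) hr.1
    have h2 := monotone_projIcc (zero_le_one' ℝ) hr.2
    rw [projIcc_val] at h1 h2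
    exact ⟨h1, h2⟩
  set S := (range φ ∪ range φ') \ {φ half, φ' half}
  have j₁ : JoinedIn S (φ 0) (φ u) := ((hIcc (bot_le (a := u))).map hφ.1).mono <| by
    rintro _ ⟨r, hr, rfl⟩
    refine ⟨Or.inl ⟨r, rfl⟩, ?_⟩
    rintro (he | he)
    · exact (hr.2.trans_lt hu).ne (hφ.2.1 he)
    · exact h' ⟨r, he⟩
  have j₂ : JoinedIn S (φ' v) (φ' 1) := ((hIcc (le_top (a := v))).map hφ'.1).mono <| by
    rintro _ ⟨r, hr, rfl⟩
    refine ⟨Or.inr ⟨r, rfl⟩, ?_⟩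
    rintro (he | he)
    · exact h ⟨r, he⟩
    · exact (hv.trans_le hr.1).ne' (hφ'.2.1 he)
  obtain ⟨γ, hγ⟩ := j₁.trans (huv ▸ j₂)
  refine ⟨γ, γ.continuous, ?_, ?_, ?_, ?_, ?_⟩
  · rintro _ ⟨r, rfl⟩
    exact (hγ r).1
  · rw [γ.source]
    exact hφ.2.2.1
  · rw [γ.target]
    exact hφ'.2.2.2.1
  · rintro ⟨r, hr⟩
    exact (hγ r).2 (Or.inl hr)
  · rintro ⟨r, hr⟩
    exact (hγ r).2 (Or.inr hr)

end IsBareCrosscut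

/-- Given two crosscuts `φₓ'`, `φₓ''` through `x` and a crosscut `φ_y` through `y`,
disjoint from `φₓ'`, with `y` on the right of `φₓ'` and on the left of `φₓ''`, there is
a path in `φₓ''(I) ∪ φ_y(I)` from the bottom edge to the top edge avoiding both `x` and
`y`. -/
theorem exists_path_avoiding (x y : ℝ × ℝ) (hx : x ∈ interior unitSq)
    (hy : y ∈ interior unitSq) (hxy : x ≠ y)
    (φx' φx'' φy : unitInterval → ℝ × ℝ)
    (hφx' : IsBareCrosscut φx') (hφx'' : IsBareCrosscut φx'') (hφy : IsBareCrosscut φy)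
    (hmidx' : φx' half = x) (hmidx'' : φx'' half = x) (hmidy : φy half = y)
    (hdisj : Set.range φx' ∩ Set.range φy = ∅)
    (hynotx'' : y ∉ Set.range φx'')
    (hright : ∀ p ∈ rightFull, p ∈ connectedComponentIn (unitSq \ Set.range φx') y)
    (hleft : ∀ p ∈ leftFull, p ∈ connectedComponentIn (unitSq \ Set.range φx'') y) :
    ∃ ψ : unitInterval → ℝ × ℝ, Continuous ψ ∧
      Set.range ψ ⊆ Set.range φx'' ∪ Set.range φy ∧
      ψ 0 ∈ botEdge ∧ ψ 1 ∈ topEdge ∧ x ∉ Set.range ψ ∧ y ∉ Set.range ψ := by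
  subst hmidx'' hmidy
  have hdisj' (s t) : φx' s ≠ φy t := fun h ↦
    (hdisj.subset ⟨mem_range_self s, h ▸ mem_range_self t⟩ : φx' s ∈ (∅ : Set (ℝ × ℝ)))
  have hxnoty : φx'' half ∉ range φy := by
    rintro ⟨t, ht⟩
    exact hdisj' half t (hmidx'.trans ht.symm)
  by_cases hlu : ∀ s ≤ 1 / 2, ∀ t ≥ 1 / 2, complexCurve φx'' s ≠ complexCurve φy t
  swap
  · push Not at hlu
    obtain ⟨s, hs, t, ht, hst⟩ := hlu
    exact hφx''.exists_path_of_meet hφy hs ht hst hxnoty hynotx''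
  by_cases hul : ∀ s ≥ 1 / 2, ∀ t ≤ 1 / 2, complexCurve φx'' s ≠ complexCurve φy t
  swap
  · push Not at hul
    obtain ⟨s, hs, t, ht, hst⟩ := hul
    obtain ⟨ψ, hψ, hr, h0, h1, hy', hx'⟩ :=
      hφy.exists_path_of_meet hφx'' ht hs hst.symm hynotx'' hxnoty
    exact ⟨ψ, hψ, hr.trans (union_comm _ _).subset, h0, h1, hx', hy'⟩
  have hne (s t) : complexCurve φx' s ≠ complexCurve φy t := fun h ↦
    hdisj' _ _ (equivRealProdCLM.symm.injective h)
  have swap {φ : unitInterval → ℝ × ℝ} (hφ : IsBareCrosscut φ) {w : ℂ} :=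
    HasSideIndex.swap (w := w) hφ.continuous_complexCurve hφy.continuous_complexCurve
      hφ.im_complexCurve_zero hφ.im_complexCurve_one hφy.im_complexCurve_zero
      hφy.im_complexCurve_one hφ.im_complexCurve hφy.im_complexCurve
  have w' := swap hφx' (fun s _ t _ ↦ hne s t) (fun s _ t _ ↦ hne s t) <|
    complexCurve_half φy ▸ hφx'.hasSideIndex_of_mem_connectedComponentIn
      (hright (1, 0) (by simp [rightFull])) (hasSideIndex_of_lt_re hφx'.continuous_complexCurve
        fun s ↦ (hφx'.re_complexCurve s).2)
  have w'' := swap hφx'' hlu hul <|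
    complexCurve_half φy ▸ hφx''.hasSideIndex_of_mem_connectedComponentIn
      (hleft (0, 0) (by simp [leftFull])) (hasSideIndex_of_re_lt hφx''.continuous_complexCurve
        fun s ↦ (hφx''.re_complexCurve s).1)
  rw [complexCurve_half, hmidx', ← complexCurve_half] at w'
  have h := w'.unique hφy.continuous_complexCurve (fun s hs ↦ hxnoty
    ⟨_, equivRealProdCLM.symm.injective (hs.trans (complexCurve_half _))⟩) w''
  simp [Real.pi_ne_zero] at h
end
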